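/- arXiv:1808.04199 — 2 statements merged into one kernel-verified Lean document; each statement's English description precedes it below -/
import Mathlib

section
/- A permutation has rev-tier at most 1 if and only if it avoids each of the permutations 2413, 2431, and 23154. Equivalently, the class of 2-reverse pass sortable permutations is Av(2413, 2431, 23154). -/
/-!
Call an occurrence of `231` and an occurrence of `132` *stacked* if the `2` of the former is at most
the `1` of the latter. Rev-tier at least `2` and containment of one of the three patterns are both
equivalent to having stacked occurrences.

For the rev-tier: a down oriented separated pair is a `231` whose `1` and `2` are consecutive
values, and every `231` yields such a pair between its `1` and its `2`, because the values climbing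
from the `1` to the `2` have to jump somewhere over the position of the `3`. Up oriented pairs and
`132` are the mirror image of this.

For the patterns: write `x p y` for the positions of the `231` and `u q v` for those of the `132`.
If `q` precedes `y`, then `u`, `q` with `v` and `y` in some order form a `2413` or a `2431`.
Otherwise `x, p, y, q, v` occur in this order and form a `23154`, unless the value at `p` exceeds
that at `v`, when `x, p, y, v` form a `2413`.
-/

/-!  Common definitions: permutation patterns, separated pairs, rev-tier. -/

/-- `π` contains the pattern `σ`. -/
def Pattern.Contains {n k : ℕ} (π : Equiv.Perm (Fin n)) (σ : Equiv.Perm (Fin k)) : Prop :=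
  ∃ α : Fin k → Fin n, StrictMono α ∧ ∀ i j : Fin k, (π (α i) < π (α j) ↔ σ i < σ j)

/-- `π` avoids the pattern `σ`. -/
def Pattern.Avoids {n k : ℕ} (π : Equiv.Perm (Fin n)) (σ : Equiv.Perm (Fin k)) : Prop :=
  ¬ Pattern.Contains π σ

/-- The pair of values `(a, a+1)` (0-indexed) is an up oriented separated pair in `σ`:
`a` precedes `a+1` and some value `> a+1` occurs strictly between them. -/
def UpSepPair {n : ℕ} (σ : Equiv.Perm (Fin n)) (a : Fin n) : Prop :=
  ∃ hb : (a : ℕ) + 1 < n,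
    σ.symm a < σ.symm ⟨(a : ℕ) + 1, hb⟩ ∧
    ∃ p : Fin n, σ.symm a < p ∧ p < σ.symm ⟨(a : ℕ) + 1, hb⟩ ∧ (a : ℕ) + 1 < (σ p : ℕ)

/-- The pair of values `(a, a+1)` (0-indexed) is a down oriented separated pair in `σ`. -/
def DownSepPair {n : ℕ} (σ : Equiv.Perm (Fin n)) (a : Fin n) : Prop :=
  ∃ hb : (a : ℕ) + 1 < n,
    σ.symm ⟨(a : ℕ) + 1, hb⟩ < σ.symm a ∧
    ∃ p : Fin n, σ.symm ⟨(a : ℕ) + 1, hb⟩ < p ∧ p < σ.symm a ∧ (a : ℕ) + 1 < (σ p : ℕ)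

/-- `(a, a+1)` is a separated pair (of either orientation). -/
def SepPair {n : ℕ} (σ : Equiv.Perm (Fin n)) (a : Fin n) : Prop :=
  UpSepPair σ a ∨ DownSepPair σ a

/-- `σ` has no separated pairs. -/
def NoSepPairs {n : ℕ} (σ : Equiv.Perm (Fin n)) : Prop :=
  ∀ a : Fin n, ¬ SepPair σ a

/-- `f` lists the lower values of an increasing sequence of separated pairs in `σ` with
alternating orientations; the first pair is down oriented iff `firstDown = true`. -/
def AltChain {n : ℕ} (σ : Equiv.Perm (Fin n)) (firstDown : Bool) {t : ℕ}
    (f : Fin t → Fin n) : Prop :=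
  StrictMono f ∧ ∀ j : Fin t,
    if ((j : ℕ) % 2 = 0) ↔ (firstDown = true) then DownSepPair σ (f j)
    else UpSepPair σ (f j)

/-- The rev-tier of `σ`: the maximal length of an increasing sequence of separated pairs
with alternating orientations beginning with a down oriented pair. -/
noncomputable def revTier {n : ℕ} (σ : Equiv.Perm (Fin n)) : ℕ :=
  sSup {t : ℕ | ∃ f : Fin t → Fin n, AltChain σ true f}

/-- Maximal length of an increasing alternating sequence of separated pairs (either
starting orientation). -/
noncomputable def maxAltLen {n : ℕ} (σ : Equiv.Perm (Fin n)) : ℕ :=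
  sSup {t : ℕ | ∃ b : Bool, ∃ f : Fin t → Fin n, AltChain σ b f}

/-- `σ` has a separated pair and every maximum-length increasing alternating sequence of
separated pairs begins with an up oriented pair. -/
def UpOriented {n : ℕ} (σ : Equiv.Perm (Fin n)) : Prop :=
  1 ≤ maxAltLen σ ∧ ¬ ∃ f : Fin (maxAltLen σ) → Fin n, AltChain σ true f

/-- `σ` has a separated pair and every maximum-length increasing alternating sequence of
separated pairs begins with a down oriented pair. -/
def DownOriented {n : ℕ} (σ : Equiv.Perm (Fin n)) : Prop :=
  1 ≤ maxAltLen σ ∧ ¬ ∃ f : Fin (maxAltLen σ) → Fin n, AltChain σ false f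

/-- `σ` is a basis element of the class of permutations of rev-tier at most `t`. -/
def IsBasisElt (t : ℕ) {n : ℕ} (σ : Equiv.Perm (Fin n)) : Prop :=
  t + 1 ≤ revTier σ ∧
  ∀ (m : ℕ) (τ : Equiv.Perm (Fin m)), m < n → Pattern.Contains σ τ → revTier τ ≤ t

/-- The entry `1` of `σ` is in (1-indexed) position `k`. -/
def onePos {n : ℕ} (σ : Equiv.Perm (Fin n)) (k : ℕ) : Prop :=
  ∀ h : 0 < n, (σ.symm ⟨0, h⟩ : ℕ) + 1 = k

/-- `η(n,k)`: number of permutations of length `n` with no separated pairs and entry `1`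
in position `k`. -/
noncomputable def eta (n k : ℕ) : ℕ :=
  Nat.card {σ : Equiv.Perm (Fin n) // NoSepPairs σ ∧ onePos σ k}

/-- `η(n)`: number of permutations of length `n` with no separated pairs. -/
noncomputable def etaTot (n : ℕ) : ℕ :=
  Nat.card {σ : Equiv.Perm (Fin n) // NoSepPairs σ}

/-- `μ_U(n,t,k)`: number of up-oriented permutations of length `n`, rev-tier `t`, with
entry `1` in position `k`. -/
noncomputable def muU (n t k : ℕ) : ℕ :=
  Nat.card {σ : Equiv.Perm (Fin n) // UpOriented σ ∧ revTier σ = t ∧ onePos σ k}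

/-- `μ_D(n,t,k)`: number of down-oriented permutations of length `n`, rev-tier `t`, with
entry `1` in position `k`. -/
noncomputable def muD (n t k : ℕ) : ℕ :=
  Nat.card {σ : Equiv.Perm (Fin n) // DownOriented σ ∧ revTier σ = t ∧ onePos σ k}

/-- `π` is a down-up alternating permutation: `π₁ > π₂ < π₃ > ⋯`. -/
def DownUp {n : ℕ} (π : Equiv.Perm (Fin n)) : Prop :=
  ∀ (i : ℕ) (h : i + 1 < n),
    if i % 2 = 0 then π ⟨i + 1, h⟩ < π ⟨i, by omega⟩
    else π ⟨i, by omega⟩ < π ⟨i + 1, h⟩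

/-- The Entringer number `E_{n,k}`: down-up alternating permutations of length `n` whose
first entry is `k` (1-indexed value). -/
noncomputable def entringer (n k : ℕ) : ℕ :=
  Nat.card {π : Equiv.Perm (Fin n) // DownUp π ∧ ∀ h : 0 < n, (π ⟨0, h⟩ : ℕ) + 1 = k}

/-- The reversal of a permutation: `(revP σ) j = σ (n + 1 - j)`. -/
def revP {n : ℕ} (σ : Equiv.Perm (Fin n)) : Equiv.Perm (Fin n) :=
  (Fin.revPerm).trans σ

/-- The explicit maximal rev-tier permutation of length `n` (0-indexed values):
the even entries of `{1,…,n}` in decreasing order, then `n`, then the odd entries in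
increasing order. -/
def maxPermVal (n : ℕ) (i : Fin n) : Fin n :=
  if h1 : (i : ℕ) < (n - 1) / 2 then
    ⟨2 * ((n - 1) / 2) - 2 * (i : ℕ) - 1, by omega⟩
  else if h2 : (i : ℕ) = (n - 1) / 2 then
    ⟨n - 1, by have := i.isLt; omega⟩
  else
    ⟨2 * ((i : ℕ) - (n - 1) / 2 - 1), by have := i.isLt; omega⟩

def p231 : Equiv.Perm (Fin 3) :=
  ⟨![1, 2, 0], ![2, 0, 1], by decide, by decide⟩

def p132 : Equiv.Perm (Fin 3) :=
  ⟨![0, 2, 1], ![0, 2, 1], by decide, by decide⟩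

def p2413 : Equiv.Perm (Fin 4) :=
  ⟨![1, 3, 0, 2], ![2, 0, 3, 1], by decide, by decide⟩

def p2431 : Equiv.Perm (Fin 4) :=
  ⟨![1, 3, 2, 0], ![3, 0, 2, 1], by decide, by decide⟩

def p23154 : Equiv.Perm (Fin 5) :=
  ⟨![1, 2, 0, 4, 3], ![2, 0, 1, 4, 3], by decide, by decide⟩

def p24153 : Equiv.Perm (Fin 5) :=
  ⟨![1, 3, 0, 4, 2], ![2, 0, 4, 1, 3], by decide, by decide⟩

def p24513 : Equiv.Perm (Fin 5) :=
  ⟨![1, 3, 4, 0, 2], ![3, 0, 4, 1, 2], by decide, by decide⟩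

def p24531 : Equiv.Perm (Fin 5) :=
  ⟨![1, 3, 4, 2, 0], ![4, 0, 3, 1, 2], by decide, by decide⟩

def p42513 : Equiv.Perm (Fin 5) :=
  ⟨![3, 1, 4, 0, 2], ![3, 1, 4, 0, 2], by decide, by decide⟩

def p42531 : Equiv.Perm (Fin 5) :=
  ⟨![3, 1, 4, 2, 0], ![4, 1, 3, 0, 2], by decide, by decide⟩

def p231564 : Equiv.Perm (Fin 6) :=
  ⟨![1, 2, 0, 4, 5, 3], ![2, 0, 1, 5, 3, 4], by decide, by decide⟩

def p261453 : Equiv.Perm (Fin 6) :=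
  ⟨![1, 5, 0, 3, 4, 2], ![2, 0, 5, 3, 4, 1], by decide, by decide⟩

def p523164 : Equiv.Perm (Fin 6) :=
  ⟨![4, 1, 2, 0, 5, 3], ![3, 1, 2, 5, 0, 4], by decide, by decide⟩

def p562413 : Equiv.Perm (Fin 6) :=
  ⟨![4, 5, 1, 3, 0, 2], ![4, 2, 5, 3, 0, 1], by decide, by decide⟩

def p562431 : Equiv.Perm (Fin 6) :=
  ⟨![4, 5, 1, 3, 2, 0], ![5, 2, 4, 3, 0, 1], by decide, by decide⟩

def p6723154 : Equiv.Perm (Fin 7) :=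
  ⟨![5, 6, 1, 2, 0, 4, 3], ![4, 2, 3, 6, 5, 0, 1], by decide, by decide⟩

def p4321 : Equiv.Perm (Fin 4) :=
  ⟨![3, 2, 1, 0], ![3, 2, 1, 0], by decide, by decide⟩

def p4213 : Equiv.Perm (Fin 4) :=
  ⟨![3, 1, 0, 2], ![2, 1, 3, 0], by decide, by decide⟩

namespace Pattern

variable {n k : ℕ} {π : Equiv.Perm (Fin n)} {τ : Equiv.Perm (Fin k)}

/-- The entries of `π` at the positions `α 0 < α 1 < ⋯` form an occurrence of the pattern `τ`.
This names the witness in `Pattern.Contains`, so that its individual entries can be referred to. -/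
def IsOccurrence (π : Equiv.Perm (Fin n)) (τ : Equiv.Perm (Fin k)) (α : Fin k → Fin n) : Prop :=
  StrictMono α ∧ ∀ i j : Fin k, (π (α i) < π (α j) ↔ τ i < τ j)

theorem isOccurrence_iff_strictMono {α : Fin k → Fin n} :
    IsOccurrence π τ α ↔ StrictMono α ∧ StrictMono (π ∘ α ∘ τ.symm) := by
  refine and_congr_right fun _ ↦ ⟨fun h i j hij ↦ ?_, fun h i j ↦ ?_⟩
  · simpa [h] using hij
  · simpa using h.lt_iff_lt (a := τ i) (b := τ j)

theorem revP_revP : revP (revP π) = π := by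
  ext i
  simp [revP]

theorem revP_p132 : revP p132 = p231 := by
  decide

theorem IsOccurrence.reverse {α : Fin k → Fin n} (h : IsOccurrence π τ α) :
    IsOccurrence (revP π) (revP τ) (Fin.rev ∘ α ∘ Fin.rev) := by
  refine ⟨fun i j hij ↦ ?_, fun i j ↦ ?_⟩
  · exact Fin.rev_lt_rev.2 (h.1 (Fin.rev_lt_rev.2 hij))
  · simpa [revP] using h.2 i.rev j.rev

theorem isOccurrence_p231_iff {α : Fin 3 → Fin n} :
    IsOccurrence π p231 α ↔
      (α 0 < α 1 ∧ α 1 < α 2) ∧ π (α 2) < π (α 0) ∧ π (α 0) < π (α 1) := by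
  simp [isOccurrence_iff_strictMono, Fin.strictMono_iff_lt_succ, Fin.forall_fin_succ, p231]

theorem isOccurrence_p132_iff {α : Fin 3 → Fin n} :
    IsOccurrence π p132 α ↔
      (α 0 < α 1 ∧ α 1 < α 2) ∧ π (α 0) < π (α 2) ∧ π (α 2) < π (α 1) := by
  simp [isOccurrence_iff_strictMono, Fin.strictMono_iff_lt_succ, Fin.forall_fin_succ, p132]

theorem IsOccurrence.p231_revP {β : Fin 3 → Fin n} (h : IsOccurrence π p132 β) :
    IsOccurrence (revP π) p231 (Fin.rev ∘ β ∘ Fin.rev) := by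
  simpa only [revP_p132] using h.reverse

theorem IsOccurrence.p132_of_revP {α : Fin 3 → Fin n} (h : IsOccurrence (revP π) p231 α) :
    IsOccurrence π p132 (Fin.rev ∘ α ∘ Fin.rev) := by
  simpa only [← revP_p132, revP_revP] using h.reverse

theorem isOccurrence_p2413_iff {α : Fin 4 → Fin n} :
    IsOccurrence π p2413 α ↔ (α 0 < α 1 ∧ α 1 < α 2 ∧ α 2 < α 3) ∧
      π (α 2) < π (α 0) ∧ π (α 0) < π (α 3) ∧ π (α 3) < π (α 1) := by
  simp [isOccurrence_iff_strictMono, Fin.strictMono_iff_lt_succ, Fin.forall_fin_succ, p2413]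

theorem isOccurrence_p2431_iff {α : Fin 4 → Fin n} :
    IsOccurrence π p2431 α ↔ (α 0 < α 1 ∧ α 1 < α 2 ∧ α 2 < α 3) ∧
      π (α 3) < π (α 0) ∧ π (α 0) < π (α 2) ∧ π (α 2) < π (α 1) := by
  simp [isOccurrence_iff_strictMono, Fin.strictMono_iff_lt_succ, Fin.forall_fin_succ, p2431]

theorem isOccurrence_p23154_iff {α : Fin 5 → Fin n} :
    IsOccurrence π p23154 α ↔ (α 0 < α 1 ∧ α 1 < α 2 ∧ α 2 < α 3 ∧ α 3 < α 4) ∧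
      π (α 2) < π (α 0) ∧ π (α 0) < π (α 1) ∧ π (α 1) < π (α 4) ∧ π (α 4) < π (α 3) := by
  simp [isOccurrence_iff_strictMono, Fin.strictMono_iff_lt_succ, Fin.forall_fin_succ, p23154]

/-- `π` has an occurrence `α` of `231` and an occurrence `β` of `132` such that the `2` of the
former is at most the `1` of the latter. This is the common reformulation of rev-tier at least `2`
and of containing `2413`, `2431` or `23154`; the two occurrences may share entries. -/
def HasStacked231And132 (π : Equiv.Perm (Fin n)) : Prop :=
  ∃ α β : Fin 3 → Fin n, IsOccurrence π p231 α ∧ IsOccurrence π p132 β ∧ π (α 0) ≤ π (β 0)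

theorem HasStacked231And132.contains (h : HasStacked231And132 π) :
    Contains π p2413 ∨ Contains π p2431 ∨ Contains π p23154 := by
  obtain ⟨α, β, hα, hβ, hxu_val⟩ := h
  obtain ⟨⟨hxp, hpy⟩, hyx_val, hxp_val⟩ := isOccurrence_p231_iff.1 hα
  obtain ⟨⟨huq, hqv⟩, huv_val, hvq_val⟩ := isOccurrence_p132_iff.1 hβ
  have hyv_val : π (α 2) < π (β 2) := by order
  have hyq_val : π (α 2) < π (β 1) := by order
  rcases lt_or_gt_of_ne (ne_of_apply_ne π hyq_val.ne') with hqy | hyq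
  · rcases lt_or_gt_of_ne (ne_of_apply_ne π hyv_val.ne) with hyv | hvy
    · refine .inl ⟨![β 0, β 1, α 2, β 2], isOccurrence_p2413_iff.2 ?_⟩
      exact ⟨⟨huq, hqy, hyv⟩, hyx_val.trans_le hxu_val, huv_val, hvq_val⟩
    · refine .inr (.inl ⟨![β 0, β 1, β 2, α 2], isOccurrence_p2431_iff.2 ?_⟩)
      exact ⟨⟨huq, hqv, hvy⟩, hyx_val.trans_le hxu_val, huv_val, hvq_val⟩
  · have hpv : α 1 < β 2 := by order
    rcases lt_or_gt_of_ne (π.injective.ne hpv.ne) with hpv_val | hvp_val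
    · refine .inr (.inr ⟨![α 0, α 1, α 2, β 1, β 2], isOccurrence_p23154_iff.2 ?_⟩)
      exact ⟨⟨hxp, hpy, hyq, hqv⟩, hyx_val, hxp_val, hpv_val, hvq_val⟩
    · refine .inl ⟨![α 0, α 1, α 2, β 2], isOccurrence_p2413_iff.2 ?_⟩
      exact ⟨⟨hxp, hpy, hyq.trans hqv⟩, hyx_val, hxu_val.trans_lt huv_val, hvp_val⟩

theorem IsOccurrence.hasStacked231And132_of_p2413 {α : Fin 4 → Fin n}
    (h : IsOccurrence π p2413 α) : HasStacked231And132 π := by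
  obtain ⟨⟨h01, h12, h23⟩, h20, h03, h31⟩ := isOccurrence_p2413_iff.1 h
  exact ⟨![α 0, α 1, α 2], ![α 0, α 1, α 3],
    isOccurrence_p231_iff.2 ⟨⟨h01, h12⟩, h20, h03.trans h31⟩,
    isOccurrence_p132_iff.2 ⟨⟨h01, h12.trans h23⟩, h03, h31⟩, le_rfl⟩

theorem IsOccurrence.hasStacked231And132_of_p2431 {α : Fin 4 → Fin n}
    (h : IsOccurrence π p2431 α) : HasStacked231And132 π := by
  obtain ⟨⟨h01, h12, h23⟩, h30, h02, h21⟩ := isOccurrence_p2431_iff.1 h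
  exact ⟨![α 0, α 1, α 3], ![α 0, α 1, α 2],
    isOccurrence_p231_iff.2 ⟨⟨h01, h12.trans h23⟩, h30, h02.trans h21⟩,
    isOccurrence_p132_iff.2 ⟨⟨h01, h12⟩, h02, h21⟩, le_rfl⟩

theorem IsOccurrence.hasStacked231And132_of_p23154 {α : Fin 5 → Fin n}
    (h : IsOccurrence π p23154 α) : HasStacked231And132 π := by
  obtain ⟨⟨h01, h12, h23, h34⟩, h20, h01', h14, h43⟩ := isOccurrence_p23154_iff.1 h
  exact ⟨![α 0, α 1, α 2], ![α 1, α 3, α 4],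
    isOccurrence_p231_iff.2 ⟨⟨h01, h12⟩, h20, h01'⟩,
    isOccurrence_p132_iff.2 ⟨⟨h12.trans h23, h34⟩, h14, h43⟩, h01'.le⟩

theorem hasStacked231And132_iff_contains :
    HasStacked231And132 π ↔ Contains π p2413 ∨ Contains π p2431 ∨ Contains π p23154 := by
  refine ⟨HasStacked231And132.contains, ?_⟩
  rintro (⟨α, hα⟩ | ⟨α, hα⟩ | ⟨α, hα⟩)
  · exact IsOccurrence.hasStacked231And132_of_p2413 hα
  · exact IsOccurrence.hasStacked231And132_of_p2431 hα
  · exact IsOccurrence.hasStacked231And132_of_p23154 hα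

end Pattern

open Pattern

section SeparatedPairs

variable {n : ℕ} {σ : Equiv.Perm (Fin n)} {a b : Fin n}

theorem downSepPair_revP_iff : DownSepPair (revP σ) a ↔ UpSepPair σ a := by
  have symm_revP (v : Fin n) : (revP σ).symm v = (σ.symm v).rev := rfl
  refine exists_congr fun _ ↦ and_congr (by simp [symm_revP]) ?_
  refine Fin.revPerm.exists_congr fun p ↦ ?_
  simp [revP, Fin.rev_lt_iff, Fin.lt_rev_iff, and_left_comm]

theorem downSepPair_iff_exists_isOccurrence :
    DownSepPair σ a ↔
      ∃ α, IsOccurrence σ p231 α ∧ σ (α 2) = a ∧ (σ (α 0) : ℕ) = a + 1 := by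
  constructor
  · rintro ⟨ha, -, p, hp, hp', hval⟩
    refine ⟨![σ.symm ⟨a + 1, ha⟩, p, σ.symm a], isOccurrence_p231_iff.2 ⟨⟨hp, hp'⟩, ?_⟩, ?_⟩
    · simpa [Fin.lt_def] using hval
    · simp
  · rintro ⟨α, hα, rfl, hsucc⟩
    obtain ⟨⟨h01, h12⟩, -, hval⟩ := isOccurrence_p231_iff.1 hα
    have hlt : (σ (α 2) : ℕ) + 1 < n := hsucc ▸ (σ (α 0)).isLt
    have hpos : σ.symm ⟨σ (α 2) + 1, hlt⟩ = α 0 := by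
      rw [Equiv.symm_apply_eq, Fin.ext_iff, hsucc]
    refine ⟨hlt, ?_⟩
    rw [hpos, σ.symm_apply_apply]
    exact ⟨h01.trans h12, α 1, h01, h12, hsucc ▸ hval⟩

theorem UpSepPair.exists_isOccurrence (h : UpSepPair σ b) :
    ∃ β, IsOccurrence σ p132 β ∧ σ (β 0) = b := by
  obtain ⟨α, hα, hval, -⟩ := downSepPair_iff_exists_isOccurrence.1 (downSepPair_revP_iff.2 h)
  exact ⟨_, hα.p132_of_revP, hval⟩

-- The lower value of the pair is the largest value below the `2` that occurs after the `3`.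
theorem exists_downSepPair_of_isOccurrence {α : Fin 3 → Fin n} (h : IsOccurrence σ p231 α) :
    ∃ a, DownSepPair σ a ∧ σ (α 2) ≤ a ∧ a < σ (α 0) := by
  obtain ⟨⟨h01, h12⟩, h20, h01'⟩ := isOccurrence_p231_iff.1 h
  obtain ⟨y, ⟨hpy, hyx⟩, hmax⟩ := Set.exists_max_image {y | α 1 < y ∧ σ y < σ (α 0)} σ
    (Set.toFinite _) ⟨α 2, h12, h20⟩
  obtain ⟨x, hx⟩ : ∃ x, (σ x : ℕ) = σ y + 1 :=
    ⟨σ.symm ⟨σ y + 1, by omega⟩, by simp⟩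
  have hx_le : σ x ≤ σ (α 0) := by omega
  have hxp : x < α 1 := by
    by_contra! hpx
    have hx_ne_p : x ≠ α 1 := ne_of_apply_ne σ (hx_le.trans_lt h01').ne
    have hx_ne : σ x ≠ σ (α 0) := σ.injective.ne (h01.trans_le hpx).ne'
    have := hmax x ⟨hpx.lt_of_ne' hx_ne_p, hx_le.lt_of_ne hx_ne⟩
    omega
  refine ⟨σ y, downSepPair_iff_exists_isOccurrence.2 ⟨![x, α 1, y], ?_, rfl, hx⟩,
    hmax _ ⟨h12, h20⟩, hyx⟩
  exact isOccurrence_p231_iff.2 ⟨⟨hxp, hpy⟩, Fin.lt_def.2 (by simp [hx]), hx_le.trans_lt h01'⟩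

theorem exists_upSepPair_of_isOccurrence {β : Fin 3 → Fin n} (h : IsOccurrence σ p132 β) :
    ∃ b, UpSepPair σ b ∧ σ (β 0) ≤ b ∧ b < σ (β 2) := by
  obtain ⟨b, hb, hbounds⟩ := exists_downSepPair_of_isOccurrence h.p231_revP
  exact ⟨b, downSepPair_revP_iff.1 hb, by simpa [revP] using hbounds⟩

theorem hasStacked231And132_iff_exists_sepPairs :
    HasStacked231And132 σ ↔ ∃ a b, a < b ∧ DownSepPair σ a ∧ UpSepPair σ b := by
  constructor
  · rintro ⟨α, β, hα, hβ, hle⟩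
    obtain ⟨a, ha, -, ha_lt⟩ := exists_downSepPair_of_isOccurrence hα
    obtain ⟨b, hb, hle_b, -⟩ := exists_upSepPair_of_isOccurrence hβ
    exact ⟨a, b, ha_lt.trans_le (hle.trans hle_b), ha, hb⟩
  · rintro ⟨a, b, hab, ha, hb⟩
    obtain ⟨α, hα, -, hval⟩ := downSepPair_iff_exists_isOccurrence.1 ha
    obtain ⟨β, hβ, rfl⟩ := hb.exists_isOccurrence
    exact ⟨α, β, hα, hβ, by omega⟩

end SeparatedPairs

section RevTier

variable {n s t : ℕ} {σ : Equiv.Perm (Fin n)}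

theorem AltChain.comp_castLE {firstDown : Bool} {f : Fin t → Fin n}
    (h : AltChain σ firstDown f) (hst : s ≤ t) : AltChain σ firstDown (f ∘ Fin.castLE hst) :=
  ⟨h.1.comp (Fin.strictMono_castLE hst), fun j ↦ h.2 (Fin.castLE hst j)⟩

theorem AltChain.length_le {firstDown : Bool} {f : Fin t → Fin n}
    (h : AltChain σ firstDown f) : t ≤ n := by
  simpa using Fintype.card_le_of_injective f h.1.injective

theorem le_revTier_iff : t ≤ revTier σ ↔ ∃ f : Fin t → Fin n, AltChain σ true f := by
  have hbdd : BddAbove {t : ℕ | ∃ f : Fin t → Fin n, AltChain σ true f} :=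
    ⟨n, fun _ ⟨_, hf⟩ ↦ hf.length_le⟩
  refine ⟨fun ht ↦ ?_, fun hf ↦ le_csSup hbdd hf⟩
  obtain ⟨f, hf⟩ : ∃ f : Fin (revTier σ) → Fin n, AltChain σ true f :=
    Nat.sSup_mem (s := {t | ∃ f : Fin t → Fin n, AltChain σ true f})
      ⟨0, Fin.elim0, fun i ↦ i.elim0, fun i ↦ i.elim0⟩ hbdd
  exact ⟨_, hf.comp_castLE ht⟩

theorem altChain_true_two_iff {f : Fin 2 → Fin n} :
    AltChain σ true f ↔ f 0 < f 1 ∧ DownSepPair σ (f 0) ∧ UpSepPair σ (f 1) := by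
  simp [AltChain, Fin.strictMono_iff_lt_succ]

theorem two_le_revTier_iff :
    2 ≤ revTier σ ↔ ∃ a b, a < b ∧ DownSepPair σ a ∧ UpSepPair σ b := by
  simp_rw [le_revTier_iff, altChain_true_two_iff]
  exact ⟨fun ⟨f, hf⟩ ↦ ⟨f 0, f 1, hf⟩, fun ⟨a, b, hab⟩ ↦ ⟨![a, b], hab⟩⟩

end RevTier

/-- rev-tier at most 1 iff avoiding 2413, 2431 and 23154. -/
theorem revTier_le_one_iff {n : ℕ} (σ : Equiv.Perm (Fin n)) :
    revTier σ ≤ 1 ↔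
      (Pattern.Avoids σ p2413 ∧ Pattern.Avoids σ p2431 ∧ Pattern.Avoids σ p23154) := by
  have two_le_iff_contains : 2 ≤ revTier σ ↔
      Contains σ p2413 ∨ Contains σ p2431 ∨ Contains σ p23154 :=
    two_le_revTier_iff.trans <| hasStacked231And132_iff_exists_sepPairs.symm.trans
      hasStacked231And132_iff_contains
  simp only [Avoids, ← not_or, ← two_le_iff_contains]
  omega
end

section
/- Let η(n,k) be the number of permutations of length n avoiding both 132 and 231 (equivalently, having no separated pairs) in which the entry 1 occurs in position k. Then η(n,k) = C(n−1, k−1), the binomial coefficient (n−1 choose k−1). -/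
/-!
Avoiding 132 and 231 means having no peak: no entry exceeds both an earlier and a later entry.
Such a permutation decreases down to its minimum and increases afterwards, so it is determined by
the set `S` of values to the left of the minimum. Conversely, for any set `S` of non-minimal
values, changing the sign of the values in `S` and sorting the signed values yields a permutation
without peaks, because the entries are the absolute values of an increasing sequence. The minimum
is in position `k` exactly when `S` consists of `k - 1` of the `n - 1` non-minimal values.
-/

section Patterns

variable {n k : ℕ}

theorem contains_iff_exists_strictMono (π : Equiv.Perm (Fin n)) (σ : Equiv.Perm (Fin k)) :
    Pattern.Contains π σ ↔ ∃ α : Fin k → Fin n, StrictMono α ∧ StrictMono (π ∘ α ∘ σ.symm) := by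
  refine exists_congr fun α => and_congr_right fun _ => ⟨fun hα u v huv => ?_, fun hα i j => ?_⟩
  · simpa [hα] using huv
  · simpa using hα.lt_iff_lt (a := σ i) (b := σ j)

theorem contains_p132_iff (π : Equiv.Perm (Fin n)) :
    Pattern.Contains π p132 ↔ ∃ i j l, i < j ∧ j < l ∧ π i < π l ∧ π l < π j := by
  simp [contains_iff_exists_strictMono, ← FinVec.exists_iff, FinVec.Exists,
    Fin.strictMono_iff_lt_succ, Fin.forall_fin_two, p132, and_assoc]

theorem contains_p231_iff (π : Equiv.Perm (Fin n)) :
    Pattern.Contains π p231 ↔ ∃ i j l, i < j ∧ j < l ∧ π l < π i ∧ π i < π j := by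
  simp [contains_iff_exists_strictMono, ← FinVec.exists_iff, FinVec.Exists,
    Fin.strictMono_iff_lt_succ, Fin.forall_fin_two, p231, and_assoc]

end Patterns

/-- `f` is free of peaks: no value of `f` exceeds both an earlier and a later value. -/
def NoPeak {α β : Type*} [Preorder α] [Preorder β] (f : α → β) : Prop :=
  ∀ ⦃i j k⦄, i < j → j < k → f i < f j → ¬f k < f j

theorem noPeak_iff_avoids {n : ℕ} (σ : Equiv.Perm (Fin n)) :
    NoPeak σ ↔ Pattern.Avoids σ p132 ∧ Pattern.Avoids σ p231 := by
  simp only [Pattern.Avoids, contains_p132_iff, contains_p231_iff]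
  refine ⟨fun h => ⟨?_, ?_⟩, fun ⟨h132, h231⟩ i j l hij hjl hi hl => ?_⟩
  · rintro ⟨i, j, l, hij, hjl, hil, hlj⟩
    exact h hij hjl (hil.trans hlj) hlj
  · rintro ⟨i, j, l, hij, hjl, hli, hij'⟩
    exact h hij hjl hij' (hli.trans hij')
  · rcases (σ.injective.ne (hij.trans hjl).ne).lt_or_gt with hil | hli
    · exact h132 ⟨i, j, l, hij, hjl, hil, hl⟩
    · exact h231 ⟨i, j, l, hij, hjl, hli, hi⟩

section NoPeak

variable {α β : Type*} [LinearOrder β]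

theorem noPeak_comp_iff_of_strictMono {γ : Type*} [Preorder α] [Preorder γ] {g : β → γ}
    (hg : StrictMono g) (f : α → β) : NoPeak (g ∘ f) ↔ NoPeak f := by
  simp only [NoPeak, Function.comp_apply, hg.lt_iff_lt]

theorem noPeak_abs_of_monotone [Preorder α] [AddCommGroup β] [IsOrderedAddMonoid β]
    {g : α → β} (hg : Monotone g) : NoPeak fun i => |g i| := fun _ _ _ hij hjk hi hk =>
  (abs_le_max_abs_abs (hg hij.le) (hg hjk.le)).not_gt (max_lt hi hk)

variable [PartialOrder α] {f : α → β} {p : α}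

theorem NoPeak.strictAntiOn_Iic (h : NoPeak f) (hf : Function.Injective f)
    (hp : ∀ i, f p ≤ f i) : StrictAntiOn f (Set.Iic p) := by
  intro i _ j hj hij
  by_contra! hle
  have hij' : f i < f j := hle.lt_of_ne (hf.ne hij.ne)
  have hpj : f p < f j := (hp i).trans_lt hij'
  exact h hij (lt_of_le_of_ne hj (ne_of_apply_ne f hpj.ne')) hij' hpj

theorem NoPeak.strictMonoOn_Ici (h : NoPeak f) (hf : Function.Injective f)
    (hp : ∀ i, f p ≤ f i) : StrictMonoOn f (Set.Ici p) := by
  intro i hi j _ hij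
  by_contra! hle
  have hji : f j < f i := hle.lt_of_ne (hf.ne hij.ne')
  have hpi : f p < f i := (hp j).trans_lt hji
  exact h (lt_of_le_of_ne hi (ne_of_apply_ne f hpi.ne)) hij hpi hji

end NoPeak

section TupleSort

variable {n : ℕ} {α : Type*} [LinearOrder α] {f : Fin n → α}

theorem eq_sort_of_strictMono_comp {σ : Equiv.Perm (Fin n)} (h : StrictMono (f ∘ σ)) :
    σ = Tuple.sort f :=
  Tuple.eq_sort_iff.2 ⟨h.monotone, fun _ _ hij heq => absurd heq (h hij).ne⟩

theorem sort_symm_lt_sort_symm_iff (hf : Function.Injective f) {u v : Fin n} :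
    (Tuple.sort f).symm u < (Tuple.sort f).symm v ↔ f u < f v := by
  have h : StrictMono (f ∘ Tuple.sort f) :=
    (Tuple.monotone_sort f).strictMono_of_injective (hf.comp (Tuple.sort f).injective)
  simpa using (h.lt_iff_lt (a := (Tuple.sort f).symm u) (b := (Tuple.sort f).symm v)).symm

end TupleSort

section Valley

variable {n : ℕ}

/-- The value `v` with its sign changed if `v ∈ S`. Sorting by signed value lists the elements of
`S` decreasingly, then the others increasingly. -/
def signedValue (S : Finset (Fin n)) (v : Fin n) : ℤ :=
  if v ∈ S then -(v : ℤ) else v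

theorem abs_signedValue (S : Finset (Fin n)) (v : Fin n) : |signedValue S v| = v := by
  unfold signedValue
  split_ifs <;> simp

theorem signedValue_injective (S : Finset (Fin n)) : Function.Injective (signedValue S) := by
  intro u v h
  have habs : |signedValue S u| = |signedValue S v| := congrArg _ h
  simpa [abs_signedValue, Fin.val_inj] using habs

/-- The permutation, in one-line notation, that lists the elements of `S` decreasingly and then
the others increasingly. The value `0` stands between the two runs even if `0 ∈ S`. -/
def valleyPerm (S : Finset (Fin n)) : Equiv.Perm (Fin n) :=
  Tuple.sort (signedValue S)

theorem noPeak_valleyPerm (S : Finset (Fin n)) : NoPeak (valleyPerm S) := by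
  have habs : NoPeak fun i => |signedValue S (valleyPerm S i)| :=
    noPeak_abs_of_monotone (Tuple.monotone_sort (signedValue S))
  simp only [abs_signedValue] at habs
  have hcast : StrictMono fun v : Fin n => (v : ℤ) := fun _ _ h => Int.ofNat_lt.2 h
  exact (noPeak_comp_iff_of_strictMono hcast _).1 habs

variable [NeZero n]

theorem signedValue_neg_iff {S : Finset (Fin n)} {v : Fin n} :
    signedValue S v < 0 ↔ v ∈ S ∧ v ≠ 0 := by
  by_cases hv : v ∈ S <;> simp [signedValue, hv, Nat.pos_iff_ne_zero]

/-- The set of values that `σ` takes before its smallest value `0`. -/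
def leftValues (σ : Equiv.Perm (Fin n)) : Finset (Fin n) :=
  (Finset.Iio (σ.symm 0)).map σ.toEmbedding

theorem mem_leftValues {σ : Equiv.Perm (Fin n)} {v : Fin n} :
    v ∈ leftValues σ ↔ σ.symm v < σ.symm 0 := by
  simp [leftValues, Finset.mem_map_equiv]

theorem card_leftValues (σ : Equiv.Perm (Fin n)) : (leftValues σ).card = σ.symm 0 := by
  simp [leftValues]

theorem leftValues_valleyPerm {S : Finset (Fin n)} (hS : 0 ∉ S) :
    leftValues (valleyPerm S) = S := by
  ext v
  have hzero : signedValue S 0 = 0 := by simp [signedValue]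
  rw [mem_leftValues, valleyPerm, sort_symm_lt_sort_symm_iff (signedValue_injective S), hzero,
    signedValue_neg_iff]
  exact and_iff_left_of_imp (ne_of_mem_of_not_mem · hS)

theorem NoPeak.strictMono_signedValue_comp {σ : Equiv.Perm (Fin n)} (h : NoPeak σ) :
    StrictMono (signedValue (leftValues σ) ∘ σ) := by
  have hmin : ∀ i, σ (σ.symm 0) ≤ σ i := by simp
  apply StrictMonoOn.Iic_union_Ici (a := σ.symm 0)
  · have hneg : ∀ i ≤ σ.symm 0, signedValue (leftValues σ) (σ i) = -(σ i : ℤ) := by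
      intro i hi
      rcases hi.eq_or_lt with rfl | hlt
      · simp [signedValue]
      · simp [signedValue, mem_leftValues, hlt]
    intro i hi j hj hij
    have hlt : σ j < σ i := h.strictAntiOn_Iic σ.injective hmin hi hj hij
    simpa [hneg i hi, hneg j hj] using hlt
  · have hpos : ∀ i ≥ σ.symm 0, signedValue (leftValues σ) (σ i) = σ i := by
      intro i hi
      simp [signedValue, mem_leftValues, hi.not_gt]
    intro i hi j hj hij
    have hlt : σ i < σ j := h.strictMonoOn_Ici σ.injective hmin hi hj hij
    simpa [hpos i hi, hpos j hj] using hlt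

theorem NoPeak.valleyPerm_leftValues {σ : Equiv.Perm (Fin n)} (h : NoPeak σ) :
    valleyPerm (leftValues σ) = σ :=
  (eq_sort_of_strictMono_comp h.strictMono_signedValue_comp).symm

theorem bijOn_leftValues :
    Set.BijOn leftValues {σ : Equiv.Perm (Fin n) | NoPeak σ} {S | 0 ∉ S} :=
  Set.InvOn.bijOn (f' := valleyPerm)
    ⟨fun _ hσ => hσ.valleyPerm_leftValues, fun _ hS => leftValues_valleyPerm hS⟩
    (fun _ _ => by simp [mem_leftValues]) (fun S _ => noPeak_valleyPerm S)

theorem ncard_noPeak_symm_zero_eq (j : ℕ) :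
    {σ : Equiv.Perm (Fin n) | NoPeak σ ∧ (σ.symm 0 : ℕ) = j}.ncard = (n - 1).choose j := by
  let T : Finset (Finset (Fin n)) := (Finset.Ioi 0).powersetCard j
  have hT : ∀ S, S ∈ T ↔ 0 ∉ S ∧ S.card = j := by
    intro S
    simp only [T, Finset.mem_powersetCard, Finset.subset_iff, Finset.mem_Ioi, Fin.pos_iff_ne_zero]
    grind
  have hbij : Set.BijOn leftValues {σ : Equiv.Perm (Fin n) | NoPeak σ ∧ (σ.symm 0 : ℕ) = j} T := by
    convert bijOn_leftValues.subset_right (r := T) fun S hS => ((hT S).1 hS).1 using 1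
    ext σ
    simp [hT, mem_leftValues, card_leftValues]
  rw [hbij.ncard_eq, Set.ncard_coe_finset, Finset.card_powersetCard, Fin.card_Ioi]
  simp

theorem onePos_iff {σ : Equiv.Perm (Fin n)} {k : ℕ} : onePos σ k ↔ (σ.symm 0 : ℕ) + 1 = k :=
  ⟨fun h => h (NeZero.pos n), fun h _ => h⟩

end Valley

/-- the number of permutations of length `n` avoiding 132 and 231 with
entry `1` in position `k` is the binomial coefficient `C(n-1, k-1)`. -/
theorem eta_eq_choose (n k : ℕ) (hn : 1 ≤ n) (hk : 1 ≤ k) (hkn : k ≤ n) :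
    Nat.card {σ : Equiv.Perm (Fin n) //
        Pattern.Avoids σ p132 ∧ Pattern.Avoids σ p231 ∧ onePos σ k}
      = (n - 1).choose (k - 1) := by
  have : NeZero n := ⟨by omega⟩
  have hpos : ∀ σ : Equiv.Perm (Fin n), onePos σ k ↔ (σ.symm 0 : ℕ) = k - 1 := by
    intro σ
    rw [onePos_iff]
    omega
  simp only [← and_assoc, ← noPeak_iff_avoids, hpos]
  exact ncard_noPeak_symm_zero_eq (k - 1)
end
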